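/- Let n ≥ 2 and let G be the graph obtained by attaching a 4-cycle to the n-joined tri-pan T(n) at an arbitrary edge of T(n). Then the edge polytope 𝒫_G is type II decomposable but not type I decomposable. -/

import Mathlib

/-- For an edge `e = {i,j}` of a graph on `[d]`, `rho e = 𝐞ᵢ + 𝐞ⱼ ∈ ℝ^d`. -/
noncomputable def rho {d : ℕ} (e : Sym2 (Fin d)) : Fin d → ℝ :=
  Sym2.lift ⟨fun i j => Pi.single i 1 + Pi.single j 1, fun _ _ => add_comm _ _⟩ e

/-- The edge polytope of a graph `G` on `[d]`: the convex hull of `{ρ(e) : e ∈ E(G)}`. -/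
noncomputable def edgePolytope {d : ℕ} (G : SimpleGraph (Fin d)) : Set (Fin d → ℝ) :=
  convexHull ℝ (rho '' G.edgeSet)

/-- A set is integral if all its extreme points have integer coordinates. -/
def IsIntegralSet {d : ℕ} (Q : Set (Fin d → ℝ)) : Prop :=
  ∀ x ∈ Q.extremePoints ℝ, ∀ i, ∃ n : ℤ, x i = (n : ℝ)

/-- The hyperplane `{x : ∑ aᵢxᵢ = c}` is a separating hyperplane of `𝒫_G`: it meets
`𝒫_G \ ∂𝒫_G` (the intrinsic interior), and both closed half-space slices are integral. -/
def IsSepHyperplane {d : ℕ} (G : SimpleGraph (Fin d)) (a : Fin d → ℝ) (c : ℝ) : Prop :=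
  a ≠ 0 ∧
  (∃ x ∈ intrinsicInterior ℝ (edgePolytope G), ∑ i, a i * x i = c) ∧
  IsIntegralSet (edgePolytope G ∩ {x | c ≤ ∑ i, a i * x i}) ∧
  IsIntegralSet (edgePolytope G ∩ {x | ∑ i, a i * x i ≤ c})

/-- `𝒫_G` is decomposable if it has a separating hyperplane. -/
def Decomposable {d : ℕ} (G : SimpleGraph (Fin d)) : Prop :=
  ∃ a c, IsSepHyperplane G a c

/-- Type I decomposability: a separating hyperplane through `0` with all `aᵢ ∈ {1,-1}`. -/
def TypeIDecomposable {d : ℕ} (G : SimpleGraph (Fin d)) : Prop :=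
  ∃ a : Fin d → ℝ, (∀ i, a i = 1 ∨ a i = -1) ∧ IsSepHyperplane G a 0

/-- Type II decomposability: a separating hyperplane through `0` with all `aᵢ ∈ {0,1,-1}`,
some `aᵢ = 0`, and no edge with signature `{1,1}` or `{-1,-1}`. -/
def TypeIIDecomposable {d : ℕ} (G : SimpleGraph (Fin d)) : Prop :=
  ∃ a : Fin d → ℝ, (∀ i, a i = 0 ∨ a i = 1 ∨ a i = -1) ∧ (∃ i, a i = 0) ∧
    (∀ i j, G.Adj i j → ¬(a i = 1 ∧ a j = 1) ∧ ¬(a i = -1 ∧ a j = -1)) ∧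
    IsSepHyperplane G a 0

/-- Attaching a 4-cycle to `G` at the edge `{i,j}`: add two new vertices `x₁ = d`, `x₂ = d+1`
and the three edges `{i,x₁}`, `{x₁,x₂}`, `{x₂,j}`. -/
def attachFourCycle {d : ℕ} (G : SimpleGraph (Fin d)) (i j : Fin d) :
    SimpleGraph (Fin (d + 2)) :=
  SimpleGraph.fromEdgeSet
    ((Sym2.map (Fin.castLE (by omega : d ≤ d + 2))) '' G.edgeSet ∪
      {s(Fin.castLE (by omega) i, (⟨d, by omega⟩ : Fin (d + 2))),
       s((⟨d, by omega⟩ : Fin (d + 2)), (⟨d + 1, by omega⟩ : Fin (d + 2))),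
       s((⟨d + 1, by omega⟩ : Fin (d + 2)), Fin.castLE (by omega) j)})

/-- The `n`-joined tri-pan `T(n)` on the `2n+2` vertices
`x = 0`, `vₖ = k` (`1 ≤ k ≤ n`), `yₖ = n+1+k` (`0 ≤ k ≤ n`), with edges
`{x,vₖ}`, `{vₖ,y_{k-1}}`, `{vₖ,yₖ}`, `{y_{k-1},yₖ}` for `1 ≤ k ≤ n`. -/
def triPan (n : ℕ) : SimpleGraph (Fin (2 * n + 2)) :=
  SimpleGraph.fromEdgeSet
    { e | ∃ k : ℕ, ∃ _h1 : 1 ≤ k, ∃ _h2 : k ≤ n,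
        e = s((⟨0, by omega⟩ : Fin (2 * n + 2)), ⟨k, by omega⟩) ∨
        e = s((⟨k, by omega⟩ : Fin (2 * n + 2)), ⟨n + k, by omega⟩) ∨
        e = s((⟨k, by omega⟩ : Fin (2 * n + 2)), ⟨n + 1 + k, by omega⟩) ∨
        e = s((⟨n + k, by omega⟩ : Fin (2 * n + 2)), ⟨n + 1 + k, by omega⟩) }


theorem sum_mul_rho {d : ℕ} (b : Fin d → ℝ) (u v : Fin d) :
    ∑ k, b k * rho s(u, v) k = b u + b v := by
  simp [rho, mul_add, Finset.sum_add_distrib, Pi.single_apply]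

theorem isLinearMap_sum_mul {d : ℕ} (b : Fin d → ℝ) :
    IsLinearMap ℝ fun y : Fin d → ℝ => ∑ k, b k * y k where
  map_add x y := by simp [mul_add, Finset.sum_add_distrib]
  map_smul c x := by simp [Finset.mul_sum, mul_left_comm]

theorem rho_mem_edgePolytope {d : ℕ} {G : SimpleGraph (Fin d)} {e : Sym2 (Fin d)}
    (he : e ∈ G.edgeSet) : rho e ∈ edgePolytope G :=
  subset_convexHull ℝ _ ⟨e, he, rfl⟩

/-- A linear inequality valid at all `ρ(e)` is valid on the edge polytope. -/
theorem le_sum_mul_of_mem_edgePolytope {d : ℕ} {G : SimpleGraph (Fin d)} {b : Fin d → ℝ} {c : ℝ}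
    (hb : ∀ u v, G.Adj u v → c ≤ b u + b v) {y : Fin d → ℝ} (hy : y ∈ edgePolytope G) :
    c ≤ ∑ k, b k * y k := by
  refine convexHull_min ?_ (convex_halfSpace_ge (isLinearMap_sum_mul b) c) hy
  rintro _ ⟨e, he, rfl⟩
  induction e using Sym2.ind with
  | _ u v => simpa [sum_mul_rho] using hb u v he

theorem nonneg_of_mem_edgePolytope {d : ℕ} {G : SimpleGraph (Fin d)} {y : Fin d → ℝ}
    (hy : y ∈ edgePolytope G) (k : Fin d) : 0 ≤ y k := by
  have h := le_sum_mul_of_mem_edgePolytope (G := G) (b := Pi.single k 1) (c := 0)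
    (fun u v _ => by simp only [Pi.single_apply]; positivity) hy
  simpa [Pi.single_apply] using h

theorem sum_eq_two_of_mem_edgePolytope {d : ℕ} {G : SimpleGraph (Fin d)} {y : Fin d → ℝ}
    (hy : y ∈ edgePolytope G) : ∑ k, y k = 2 := by
  have h₁ := le_sum_mul_of_mem_edgePolytope (G := G) (b := fun _ => 1) (c := 2)
    (fun u v _ => by norm_num) hy
  have h₂ := le_sum_mul_of_mem_edgePolytope (G := G) (b := fun _ => -1) (c := -2)
    (fun u v _ => by norm_num) hy
  simp at h₁ h₂
  linarith

theorem rho_isInt {d : ℕ} (e : Sym2 (Fin d)) (k : Fin d) : ∃ n : ℤ, rho e k = n := by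
  induction e using Sym2.ind with
  | _ u v =>
    refine ⟨(Pi.single u 1 : Fin d → ℤ) k + (Pi.single v 1 : Fin d → ℤ) k, ?_⟩
    simp [rho, Pi.single_apply]

/-- A relative interior point can be pushed slightly away from any other point of the set. -/
theorem exists_lineMap_mem_of_mem_intrinsicInterior {V : Type*} [NormedAddCommGroup V]
    [NormedSpace ℝ V] {s : Set V} {x p : V} (hx : x ∈ intrinsicInterior ℝ s) (hp : p ∈ s) :
    ∃ t : ℝ, 1 < t ∧ AffineMap.lineMap p x t ∈ s := by
  obtain ⟨x, hx, rfl⟩ := hx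
  let p' : affineSpan ℝ s := ⟨p, subset_affineSpan ℝ s hp⟩
  let g : ℝ → affineSpan ℝ s := fun t =>
    ⟨AffineMap.lineMap p (x : V) t, AffineMap.lineMap_mem t p'.2 x.2⟩
  have hg : Continuous g := by
    refine Continuous.subtype_mk ?_ _
    exact AffineMap.lineMap_continuous
  have h1 : g 1 = x := by ext; simp [g]
  have hnhds : ∀ᶠ t in nhds (1 : ℝ), g t ∈ ((↑) ⁻¹' s : Set (affineSpan ℝ s)) :=
    hg.continuousAt.eventually_mem (by rw [h1]; exact mem_interior_iff_mem_nhds.1 hx)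
  obtain ⟨t, ht, ht1⟩ :=
    ((hnhds.filter_mono nhdsWithin_le_nhds).and (self_mem_nhdsWithin (s := Set.Ioi (1 : ℝ)))).exists
  exact ⟨t, ht1, ht⟩

/-- The half-open segment from a point of a convex set to a relative interior point consists of
relative interior points. -/
theorem Convex.lineMap_mem_intrinsicInterior {V : Type*} [NormedAddCommGroup V]
    [NormedSpace ℝ V] {s : Set V} (hs : Convex ℝ s) {x p : V} (hx : x ∈ intrinsicInterior ℝ s)
    (hp : p ∈ s) {t : ℝ} (ht₀ : 0 < t) (ht₁ : t ≤ 1) :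
    AffineMap.lineMap p x t ∈ intrinsicInterior ℝ s := by
  obtain ⟨x, hx, rfl⟩ := hx
  let p' : affineSpan ℝ s := ⟨p, subset_affineSpan ℝ s hp⟩
  let g : affineSpan ℝ s → affineSpan ℝ s := fun z =>
    ⟨AffineMap.lineMap p (z : V) t⁻¹, AffineMap.lineMap_mem _ p'.2 z.2⟩
  have hg : Continuous g := by
    refine Continuous.subtype_mk ?_ _
    simp only [AffineMap.lineMap_apply_module]
    fun_prop
  refine ⟨⟨AffineMap.lineMap p (x : V) t, AffineMap.lineMap_mem t p'.2 x.2⟩, ?_, rfl⟩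
  refine mem_interior.2 ⟨g ⁻¹' interior ((↑) ⁻¹' s), ?_, isOpen_interior.preimage hg, ?_⟩
  · intro z hz
    have hgz : g z ∈ ((↑) ⁻¹' s : Set (affineSpan ℝ s)) := interior_subset hz
    have h := hs.lineMap_mem hp hgz ⟨ht₀.le, ht₁⟩
    have : AffineMap.lineMap p (g z : V) t = (z : V) := by
      simp [g, AffineMap.lineMap_apply_module', smul_smul, ht₀.ne']
    rw [this] at h
    exact h
  · rw [Set.mem_preimage]
    convert hx using 1
    ext
    simp [g, AffineMap.lineMap_apply_module', smul_smul, ht₀.ne']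

/-- If `e` and `f` are the only edges off the hyperplane, lie on different sides of it, and
`ρ(e) + ρ(f)` is a sum of two other vertices, then the positive slice is integral. -/
theorem isIntegralSet_slice_of_exchange {d : ℕ} {G : SimpleGraph (Fin d)} {a : Fin d → ℝ}
    {e f g h : Sym2 (Fin d)} (he : e ∈ G.edgeSet) (hf : f ∈ G.edgeSet) (hg : g ∈ G.edgeSet)
    (hh : h ∈ G.edgeSet) (hge : g ≠ e) (hgf : g ≠ f) (hhe : h ≠ e) (hhf : h ≠ f)
    (hrho : rho e + rho f = rho g + rho h) (hae : ∑ k, a k * rho e k = 1)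
    (haf : ∑ k, a k * rho f k = -1)
    (ha : ∀ e' ∈ G.edgeSet, e' ≠ e → e' ≠ f → ∑ k, a k * rho e' k = 0) :
    IsIntegralSet (edgePolytope G ∩ {x | 0 ≤ ∑ k, a k * x k}) := by
  have hlin := isLinearMap_sum_mul a
  set φ := IsLinearMap.mk' _ hlin
  set W := rho '' (G.edgeSet \ {e, f}) with hW
  have hgW : rho g ∈ W := ⟨g, ⟨hg, by simp [hge, hgf]⟩, rfl⟩
  have hhW : rho h ∈ W := ⟨h, ⟨hh, by simp [hhe, hhf]⟩, rfl⟩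
  have hWne : W.Nonempty := ⟨_, hgW⟩
  have hins : rho '' G.edgeSet = insert (rho f) (insert (rho e) W) := by
    rw [hW, ← Set.image_insert_eq, ← Set.image_insert_eq]
    congr 1
    ext x
    by_cases hxe : x = e <;> by_cases hxf : x = f <;> simp_all
  have hφW : ∀ z ∈ convexHull ℝ W, φ z = 0 := by
    refine convexHull_min ?_ (convex_hyperplane hlin 0)
    rintro _ ⟨e', ⟨he', hne⟩, rfl⟩
    simp only [Set.mem_insert_iff, Set.mem_singleton_iff, not_or] at hne
    exact ha e' he' hne.1 hne.2
  have hφe : φ (rho e) = 1 := hae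
  have hφf : φ (rho f) = -1 := haf
  have hslice : edgePolytope G ∩ {x | 0 ≤ ∑ k, a k * x k} = convexHull ℝ (insert (rho e) W) := by
    apply Set.Subset.antisymm
    · rintro x ⟨hx, hax⟩
      have hφx : 0 ≤ φ x := hax
      rw [edgePolytope, hins, convexHull_insert (Set.insert_nonempty _ _),
        convexHull_insert hWne] at hx
      simp only [mem_convexJoin, Set.mem_singleton_iff, exists_eq_left] at hx
      obtain ⟨y, ⟨z, hz, β, γ, hβ, hγ, hβγ, rfl⟩, α, δ, hα, hδ, hαδ, rfl⟩ := hx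
      simp only [map_add, map_smul, hφe, hφf, hφW z hz, smul_eq_mul] at hφx
      have hconv := convex_convexHull ℝ (insert (rho e) W)
      have hmem : ∀ w ∈ convexHull ℝ W, w ∈ convexHull ℝ (insert (rho e) W) := fun w hw =>
        convexHull_mono (Set.subset_insert _ _) hw
      have hE : rho e ∈ convexHull ℝ (insert (rho e) W) :=
        subset_convexHull ℝ _ (Set.mem_insert _ _)
      have hR := hmem _ (subset_convexHull ℝ _ hgW)
      have hS := hmem _ (subset_convexHull ℝ _ hhW)
      have hkey : α • rho f + δ • (β • rho e + γ • z) =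
          ∑ m : Fin 4, ![δ * β - α, α, α, δ * γ] m • ![rho e, rho g, rho h, z] m := by
        have : rho f = rho g + rho h - rho e := by rw [← hrho]; abel
        rw [this]
        simp only [Fin.sum_univ_four]
        simp
        module
      rw [hkey]
      refine hconv.sum_mem ?_ ?_ ?_
      · intro m _
        fin_cases m <;> simp <;> first | positivity | linarith
      · simp only [Fin.sum_univ_four]
        simp
        linear_combination hαδ + δ * hβγ
      · intro m _
        fin_cases m
        exacts [hE, hR, hS, hmem z hz]
    · refine Set.subset_inter ?_ ?_
      · rw [edgePolytope, hins]
        exact convexHull_mono (Set.subset_insert _ _)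
      · refine convexHull_min ?_ (convex_halfSpace_ge hlin 0)
        rintro w (rfl | hw)
        · simp [hae]
        · exact (hφW w (subset_convexHull ℝ _ hw)).ge
  rw [hslice]
  intro x hx k
  rcases extremePoints_convexHull_subset hx with rfl | ⟨e', -, rfl⟩
  exacts [rho_isInt e k, rho_isInt e' k]

theorem IsSepHyperplane.neg {d : ℕ} {G : SimpleGraph (Fin d)} {a : Fin d → ℝ}
    (h : IsSepHyperplane G a 0) : IsSepHyperplane G (-a) 0 := by
  obtain ⟨ha, ⟨x, hx, hx0⟩, hpos, hneg⟩ := h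
  refine ⟨neg_ne_zero.2 ha, ⟨x, hx, ?_⟩, ?_, ?_⟩
  · simpa using hx0
  · simpa using hneg
  · simpa using hpos

/-- A hyperplane with vertices of the edge polytope strictly on both sides meets its relative
interior. -/
theorem exists_mem_intrinsicInterior_sum_mul_eq_zero {d : ℕ} {G : SimpleGraph (Fin d)}
    {a p q : Fin d → ℝ} (hp : p ∈ edgePolytope G) (hq : q ∈ edgePolytope G)
    (hap : 0 < ∑ k, a k * p k) (haq : ∑ k, a k * q k < 0) :
    ∃ x ∈ intrinsicInterior ℝ (edgePolytope G), ∑ k, a k * x k = 0 := by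
  have hconv : Convex ℝ (edgePolytope G) := convex_convexHull ℝ _
  obtain ⟨z, hz⟩ := Set.Nonempty.intrinsicInterior hconv ⟨p, hp⟩
  set φ := IsLinearMap.mk' _ (isLinearMap_sum_mul a)
  suffices ∃ r ∈ edgePolytope G, ∃ t : ℝ, 0 < t ∧ t ≤ 1 ∧ (1 - t) * φ r + t * φ z = 0 by
    obtain ⟨r, hr, t, ht₀, ht₁, h⟩ := this
    refine ⟨_, hconv.lineMap_mem_intrinsicInterior hz hr ht₀ ht₁, ?_⟩
    change φ _ = 0
    simpa [AffineMap.lineMap_apply_module] using h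
  change 0 < φ p at hap
  change φ q < 0 at haq
  rcases le_total 0 (φ z) with h | h
  · have : 0 < φ z - φ q := by linarith
    refine ⟨q, hq, -φ q / (φ z - φ q), div_pos (by linarith) this, ?_, ?_⟩
    · rw [div_le_one this]; linarith
    · field_simp; ring
  · have : 0 < φ p - φ z := by linarith
    refine ⟨p, hp, φ p / (φ p - φ z), div_pos (by linarith) this, ?_, ?_⟩
    · rw [div_le_one this]; linarith
    · field_simp; ring

theorem attachFourCycle_adj {d : ℕ} (G : SimpleGraph (Fin d)) (i j : Fin d) (u v : Fin (d + 2)) :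
    (attachFourCycle G i j).Adj u v ↔
      (∃ (hu : (u : ℕ) < d) (hv : (v : ℕ) < d), G.Adj ⟨u, hu⟩ ⟨v, hv⟩) ∨
      ((u : ℕ) = i ∧ (v : ℕ) = d) ∨ ((u : ℕ) = d ∧ (v : ℕ) = i) ∨
      ((u : ℕ) = d ∧ (v : ℕ) = d + 1) ∨ ((u : ℕ) = d + 1 ∧ (v : ℕ) = d) ∨
      ((u : ℕ) = d + 1 ∧ (v : ℕ) = j) ∨ ((u : ℕ) = j ∧ (v : ℕ) = d + 1) := by
  have hmap : s(u, v) ∈ Sym2.map (Fin.castLE (by omega : d ≤ d + 2)) '' G.edgeSet ↔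
      ∃ (hu : (u : ℕ) < d) (hv : (v : ℕ) < d), G.Adj ⟨u, hu⟩ ⟨v, hv⟩ := by
    constructor
    · rintro ⟨e, he, heq⟩
      induction e using Sym2.ind with
      | _ u' v' =>
        rw [Sym2.map_mk, Sym2.eq_iff] at heq
        rcases heq with ⟨rfl, rfl⟩ | ⟨rfl, rfl⟩
        · exact ⟨u'.2, v'.2, he⟩
        · exact ⟨v'.2, u'.2, SimpleGraph.Adj.symm he⟩
    · rintro ⟨hu, hv, h⟩
      exact ⟨s(⟨u, hu⟩, ⟨v, hv⟩), h, rfl⟩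
  rw [attachFourCycle, SimpleGraph.fromEdgeSet_adj, Set.mem_union, hmap]
  simp only [Set.mem_insert_iff, Set.mem_singleton_iff, Sym2.eq_iff, Fin.ext_iff, ne_eq,
    Fin.val_castLE]
  have hi := i.2
  have hj := j.2
  constructor
  · rintro ⟨h | h, -⟩
    · exact Or.inl h
    · omega
  · rintro (⟨hu, hv, h⟩ | h)
    · exact ⟨Or.inl ⟨hu, hv, h⟩, by simpa [Fin.ext_iff] using h.ne⟩
    · exact ⟨Or.inr (by omega), by omega⟩

/-- Attaching a 4-cycle at any edge of any graph gives a type II decomposable edge polytope. -/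
theorem attachFourCycle_typeIIDecomposable {d : ℕ} (G : SimpleGraph (Fin d)) {i j : Fin d}
    (hij : G.Adj i j) : TypeIIDecomposable (attachFourCycle G i j) := by
  set G' := attachFourCycle G i j with hG'
  have hi := i.2
  have hj := j.2
  let i' : Fin (d + 2) := ⟨i, by omega⟩
  let j' : Fin (d + 2) := ⟨j, by omega⟩
  let p : Fin (d + 2) := ⟨d, by omega⟩
  let q : Fin (d + 2) := ⟨d + 1, by omega⟩
  let a : Fin (d + 2) → ℝ := fun k => if (k : ℕ) = d then 1 else if (k : ℕ) = d + 1 then -1 else 0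
  have hip : s(i', p) ∈ G'.edgeSet := by simp [hG', attachFourCycle_adj, i', p]
  have hqj : s(q, j') ∈ G'.edgeSet := by simp [hG', attachFourCycle_adj, j', q]
  have hpq : s(p, q) ∈ G'.edgeSet := by simp [hG', attachFourCycle_adj, p, q]
  have hij' : s(i', j') ∈ G'.edgeSet := by simp [hG', attachFourCycle_adj, i', j', hij]
  have hne₁ : s(p, q) ≠ s(i', p) := by simp [Fin.ext_iff, i', p, q]; omega
  have hne₂ : s(p, q) ≠ s(q, j') := by simp [Fin.ext_iff, j', p, q]; omega
  have hne₃ : s(i', j') ≠ s(i', p) := by simp [Fin.ext_iff, i', j', p]; omega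
  have hne₄ : s(i', j') ≠ s(q, j') := by simp [Fin.ext_iff, i', j', q]; omega
  have hai : a i' = 0 := by simp [a, i', show (i : ℕ) ≠ d by omega, show (i : ℕ) ≠ d + 1 by omega]
  have haj : a j' = 0 := by simp [a, j', show (j : ℕ) ≠ d by omega, show (j : ℕ) ≠ d + 1 by omega]
  have hap : a p = 1 := by simp [a, p]
  have haq : a q = -1 := by simp [a, q]
  have hrho : rho s(i', p) + rho s(q, j') = rho s(p, q) + rho s(i', j') := by
    simp only [rho, Sym2.lift_mk]; abel
  have hzero : ∀ e ∈ G'.edgeSet, e ≠ s(i', p) → e ≠ s(q, j') → ∑ k, a k * rho e k = 0 := by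
    intro e he h₁ h₂
    induction e using Sym2.ind with
    | _ u v =>
      rw [sum_mul_rho]
      rw [SimpleGraph.mem_edgeSet, hG', attachFourCycle_adj] at he
      simp only [ne_eq, Sym2.eq_iff, Fin.ext_iff, i', j', p, q] at h₁ h₂
      simp only [a]
      rcases he with ⟨hu, hv, -⟩ | he
      · simp [hu.ne, hv.ne, (hu.trans (Nat.lt_succ_self d)).ne, (hv.trans (Nat.lt_succ_self d)).ne]
      · have : ((u : ℕ) = d ∧ (v : ℕ) = d + 1) ∨ ((u : ℕ) = d + 1 ∧ (v : ℕ) = d) := by omega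
        rcases this with ⟨hu, hv⟩ | ⟨hu, hv⟩ <;> simp [hu, hv]
  have hsip : ∑ k, a k * rho s(i', p) k = 1 := by rw [sum_mul_rho, hai, hap, zero_add]
  have hsqj : ∑ k, a k * rho s(q, j') k = -1 := by rw [sum_mul_rho, haq, haj, add_zero]
  refine ⟨a, fun k => ?_, ⟨i', hai⟩, fun u v huv => ?_, fun h => ?_, ?_, ?_, ?_⟩
  · simp only [a]; split_ifs <;> simp
  · have hval : ∀ k, (a k = 1 → (k : ℕ) = d) ∧ (a k = -1 → (k : ℕ) = d + 1) := by
      intro k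
      simp only [a]
      split_ifs <;> norm_num <;> assumption
    refine ⟨fun h => huv.ne (Fin.ext ?_), fun h => huv.ne (Fin.ext ?_)⟩
    · rw [(hval u).1 h.1, (hval v).1 h.2]
    · rw [(hval u).2 h.1, (hval v).2 h.2]
  · rw [h] at hap
    simp at hap
  · exact exists_mem_intrinsicInterior_sum_mul_eq_zero (rho_mem_edgePolytope hip)
      (rho_mem_edgePolytope hqj) (by rw [hsip]; norm_num) (by rw [hsqj]; norm_num)
  · exact isIntegralSet_slice_of_exchange hip hqj hpq hij' hne₁ hne₂ hne₃ hne₄ hrho hsip hsqj hzero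
  · have := isIntegralSet_slice_of_exchange (a := -a) hqj hip hpq hij' hne₂ hne₁ hne₄ hne₃
      ((add_comm _ _).trans hrho) (by simp [hsqj]) (by simp [hsip])
      (fun e he h₁ h₂ => by simp [hzero e he h₂ h₁])
    simpa using this

/-- The sign vector that is `-1` exactly on a non-adjacent pair is nonnegative on all edges. -/
theorem ite_neg_one_add_nonneg_of_not_adj {d : ℕ} {G : SimpleGraph (Fin d)} {v w : Fin d}
    (hw : ¬ G.Adj v w) (k l : Fin d) (hkl : G.Adj k l) :
    (0 : ℝ) ≤ (if k = v ∨ k = w then -1 else 1) + (if l = v ∨ l = w then -1 else 1) := by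
  by_cases hk : k = v ∨ k = w <;> by_cases hl : l = v ∨ l = w
  · exfalso
    rcases hk with rfl | rfl <;> rcases hl with rfl | rfl
    exacts [hkl.ne rfl, hw hkl, hw hkl.symm, hkl.ne rfl]
  all_goals simp only [hk, hl, if_true, if_false]; norm_num

/-- Given a positive edge `{u,v}` and a negative edge `{s,t}`, if `v` is adjacent to neither `s` nor
`t` then the midpoint of `ρ({u,v})` and `ρ({s,t})` is a non-integral extreme point of the slice. -/
theorem not_isIntegralSet_slice {d : ℕ} {G : SimpleGraph (Fin d)} {a : Fin d → ℝ}
    {u v s t : Fin d} (huv : G.Adj u v) (hst : G.Adj s t) (hau : a u = 1) (hav : a v = 1)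
    (has : a s = -1) (hat : a t = -1) (hvs : ¬ G.Adj v s) (hvt : ¬ G.Adj v t) :
    ¬ IsIntegralSet (edgePolytope G ∩ {x | 0 ≤ ∑ k, a k * x k}) := by
  have hsgn : ∀ {k l}, a k = 1 → a l = -1 → k ≠ l := by
    rintro k l hk hl rfl
    linarith
  have hus := hsgn hau has
  have hut := hsgn hau hat
  have hvs' := hsgn hav has
  have hvt' := hsgn hav hat
  have huv' := huv.ne
  have hst' := hst.ne
  set m : Fin d → ℝ := (1 / 2 : ℝ) • rho s(u, v) + (1 / 2 : ℝ) • rho s(s, t) with hm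
  have hmb : ∀ b : Fin d → ℝ, ∑ k, b k * m k = (b u + b v + (b s + b t)) / 2 := by
    intro b
    have h := (isLinearMap_sum_mul b).map_add ((1 / 2 : ℝ) • rho s(u, v))
      ((1 / 2 : ℝ) • rho s(s, t))
    rw [(isLinearMap_sum_mul b).map_smul, (isLinearMap_sum_mul b).map_smul, sum_mul_rho,
      sum_mul_rho] at h
    rw [hm, h]
    simp only [smul_eq_mul]
    ring
  have hmk : ∀ k, m k = if k = u ∨ k = v ∨ k = s ∨ k = t then 1 / 2 else 0 := by
    intro k
    split_ifs with hk
    · rcases hk with rfl | rfl | rfl | rfl <;>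
        simp [hm, rho, hus, hut, hvs', hvt', huv', hst', hus.symm, hut.symm,
          hvs'.symm, hvt'.symm, huv'.symm, hst'.symm]
    · push Not at hk
      simp [hm, rho, hk]
  have hmP : m ∈ edgePolytope G :=
    (convex_convexHull ℝ _) (rho_mem_edgePolytope huv) (rho_mem_edgePolytope hst)
      (by norm_num) (by norm_num) (by norm_num)
  intro hint
  suffices hext : m ∈ (edgePolytope G ∩ {x | 0 ≤ ∑ k, a k * x k}).extremePoints ℝ by
    obtain ⟨N, hN⟩ := hint m hext u
    rw [hmk u, if_pos (Or.inl rfl)] at hN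
    have : (1 : ℝ) = ((2 * N : ℤ) : ℝ) := by push_cast; linarith
    have : (1 : ℤ) = 2 * N := by exact_mod_cast this
    omega
  refine mem_extremePoints.2 ⟨⟨hmP, ?_⟩, ?_⟩
  · simp [hmb, hau, hav, has, hat]
  rintro y ⟨hy, hya⟩ z ⟨hz, hza⟩ ⟨α, β, hα, hβ, hαβ, hyz⟩
  have hlin : ∀ b : Fin d → ℝ, α * ∑ k, b k * y k + β * ∑ k, b k * z k =
      (b u + b v + (b s + b t)) / 2 := by
    intro b
    have h := (isLinearMap_sum_mul b).map_add (α • y) (β • z)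
    rw [(isLinearMap_sum_mul b).map_smul, (isLinearMap_sum_mul b).map_smul, hyz, hmb] at h
    exact h.symm
  have hvanish : ∀ b : Fin d → ℝ, 0 ≤ ∑ k, b k * y k → 0 ≤ ∑ k, b k * z k →
      b u + b v + (b s + b t) = 0 → ∑ k, b k * y k = 0 ∧ ∑ k, b k * z k = 0 := by
    intro b hby hbz hb
    have h := hlin b
    rw [hb, zero_div] at h
    have h₁ := mul_nonneg hα.le hby
    have h₂ := mul_nonneg hβ.le hbz
    exact ⟨(mul_eq_zero.1 (by linarith : α * _ = 0)).resolve_left hα.ne',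
      (mul_eq_zero.1 (by linarith : β * _ = 0)).resolve_left hβ.ne'⟩
  have hface : ∀ b : Fin d → ℝ, (∀ k l, G.Adj k l → 0 ≤ b k + b l) →
      b u + b v + (b s + b t) = 0 → ∑ k, b k * y k = 0 ∧ ∑ k, b k * z k = 0 := fun b hb =>
    hvanish b (le_sum_mul_of_mem_edgePolytope hb hy) (le_sum_mul_of_mem_edgePolytope hb hz)
  have hs := hface _ (ite_neg_one_add_nonneg_of_not_adj hvs) (by simp [huv', hus, hst'.symm, hvt'.symm])
  have ht := hface _ (ite_neg_one_add_nonneg_of_not_adj hvt) (by simp [huv', hut, hst', hvs'.symm])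
  have ha := hvanish a hya hza (by rw [hau, hav, has, hat]; norm_num)
  have hout : ∀ k, ¬ (k = u ∨ k = v ∨ k = s ∨ k = t) → y k = 0 ∧ z k = 0 := by
    intro k hk
    push Not at hk
    have hval : ∀ x : Fin d → ℝ, ∑ l, (Pi.single k 1 : Fin d → ℝ) l * x l = x k := fun x => by
      simp [Pi.single_apply]
    have h := hvanish (Pi.single k 1) (by rw [hval]; exact nonneg_of_mem_edgePolytope hy k)
      (by rw [hval]; exact nonneg_of_mem_edgePolytope hz k)
      (by simp [hk.1.symm, hk.2.1.symm, hk.2.2.1.symm, hk.2.2.2.symm])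
    rwa [hval, hval] at h
  have hsum : ∀ x : Fin d → ℝ, (∀ k, ¬ (k = u ∨ k = v ∨ k = s ∨ k = t) → x k = 0) →
      ∀ b : Fin d → ℝ, ∑ k, b k * x k = b u * x u + (b v * x v + (b s * x s + b t * x t)) := by
    intro x hx b
    have hsub : ∑ k ∈ ({u, v, s, t} : Finset (Fin d)), b k * x k = ∑ k, b k * x k :=
      Finset.sum_subset (Finset.subset_univ _) fun k _ hk => by
        rw [hx k (by simpa using hk), mul_zero]
    rw [← hsub, Finset.sum_insert (by simp [huv', hus, hut]),
      Finset.sum_insert (by simp [hvs', hvt']), Finset.sum_pair hst']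
  have hfinal : ∀ x ∈ edgePolytope G, (∀ k, ¬ (k = u ∨ k = v ∨ k = s ∨ k = t) → x k = 0) →
      ∑ k, (if k = v ∨ k = s then -1 else 1) * x k = 0 →
      ∑ k, (if k = v ∨ k = t then -1 else 1) * x k = 0 → ∑ k, a k * x k = 0 → x = m := by
    intro x hxP hx h₁ h₂ h₃
    have h₄ := sum_eq_two_of_mem_edgePolytope hxP
    have h₅ := hsum x hx (fun _ => 1)
    simp only [one_mul, h₄] at h₅
    rw [hsum x hx] at h₁ h₂ h₃
    simp [huv', hus, hut, hst', hst'.symm, hvs'.symm, hvt'.symm] at h₁ h₂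
    rw [hau, hav, has, hat] at h₃
    funext k
    rw [hmk k]
    split_ifs with hk
    · rcases hk with rfl | rfl | rfl | rfl <;> linarith
    · exact hx k hk
  exact ⟨hfinal y hy (fun k hk => (hout k hk).1) hs.1 ht.1 ha.1,
    hfinal z hz (fun k hk => (hout k hk).2) hs.2 ht.2 ha.2⟩

/-- For a separating hyperplane, a positive and a negative edge span a 4-cycle in which they are
opposite. -/
theorem IsSepHyperplane.cross {d : ℕ} {G : SimpleGraph (Fin d)} {a : Fin d → ℝ}
    (h : IsSepHyperplane G a 0) {u v s t : Fin d} (huv : G.Adj u v) (hst : G.Adj s t)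
    (hau : a u = 1) (hav : a v = 1) (has : a s = -1) (hat : a t = -1) :
    (G.Adj u s ∧ G.Adj v t) ∨ (G.Adj u t ∧ G.Adj v s) := by
  have hpos : ∀ {u v}, G.Adj u v → a u = 1 → a v = 1 → G.Adj v s ∨ G.Adj v t := by
    intro u v huv hau hav
    by_contra! hcon
    exact not_isIntegralSet_slice huv hst hau hav has hat hcon.1 hcon.2 h.2.2.1
  have hneg : ∀ {s t}, G.Adj s t → a s = -1 → a t = -1 → G.Adj t u ∨ G.Adj t v := by
    intro s t hst has hat
    by_contra! hcon
    exact not_isIntegralSet_slice (a := -a) hst huv (by simp [has]) (by simp [hat]) (by simp [hau])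
      (by simp [hav]) hcon.1 hcon.2 h.neg.2.2.1
  have h₁ := hpos huv hau hav
  have h₂ := hpos huv.symm hav hau
  have h₃ := hneg hst has hat
  have h₄ := hneg hst.symm hat has
  simp only [G.adj_comm s, G.adj_comm t] at h₃ h₄
  tauto

/-- A separating hyperplane with a positive edge also has a negative edge. -/
theorem IsSepHyperplane.exists_adj_neg {d : ℕ} {G : SimpleGraph (Fin d)} {a : Fin d → ℝ}
    (h : IsSepHyperplane G a 0) {u v : Fin d} (huv : G.Adj u v) (hpos : 0 < a u + a v) :
    ∃ s t, G.Adj s t ∧ a s + a t < 0 := by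
  by_contra! hcon
  obtain ⟨x, hx, hx0⟩ := h.2.1
  obtain ⟨t, ht, hmem⟩ :=
    exists_lineMap_mem_of_mem_intrinsicInterior hx (rho_mem_edgePolytope (e := s(u, v)) huv)
  have hle := le_sum_mul_of_mem_edgePolytope hcon hmem
  have hval : ∑ k, a k * AffineMap.lineMap (rho s(u, v)) x t k = (1 - t) * (a u + a v) := by
    have h := (isLinearMap_sum_mul a).map_add ((1 - t) • rho s(u, v)) (t • x)
    rw [(isLinearMap_sum_mul a).map_smul, (isLinearMap_sum_mul a).map_smul, sum_mul_rho, hx0] at h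
    rw [AffineMap.lineMap_apply_module, h]
    simp
  rw [hval] at hle
  nlinarith

/-- The edges of the tri-pan `T(n)`, read on vertex labels in one direction. -/
def TriPanStep (n u v : ℕ) : Prop :=
  (u = 0 ∧ 1 ≤ v ∧ v ≤ n) ∨ (1 ≤ u ∧ u ≤ n ∧ v = n + u) ∨ (1 ≤ u ∧ u ≤ n ∧ v = n + 1 + u) ∨
    (n + 1 ≤ u ∧ u ≤ 2 * n ∧ v = u + 1)

/-- The edges of the tri-pan with a 4-cycle attached at `{i,j}`, read on vertex labels. -/
def AttachedStep (n i j u v : ℕ) : Prop :=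
  TriPanStep n u v ∨ TriPanStep n v u ∨
    (u = i ∧ v = 2 * n + 2) ∨ (u = 2 * n + 2 ∧ v = i) ∨
    (u = 2 * n + 2 ∧ v = 2 * n + 3) ∨ (u = 2 * n + 3 ∧ v = 2 * n + 2) ∨
    (u = 2 * n + 3 ∧ v = j) ∨ (u = j ∧ v = 2 * n + 3)

theorem triPan_adj (n : ℕ) (u v : Fin (2 * n + 2)) :
    (triPan n).Adj u v ↔ TriPanStep n u v ∨ TriPanStep n v u := by
  rw [triPan, SimpleGraph.fromEdgeSet_adj]
  simp only [Set.mem_ofPred_eq, Sym2.eq_iff, Fin.ext_iff, ne_eq, TriPanStep]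
  constructor
  · rintro ⟨⟨k, h₁, h₂, h | h | h | h⟩, -⟩ <;> rcases h with h | h <;> omega
  · intro h
    refine ⟨?_, by omega⟩
    rcases h with (h | h | h | h) | (h | h | h | h)
    · exact ⟨v, by omega, by omega, by omega⟩
    · exact ⟨u, by omega, by omega, by omega⟩
    · exact ⟨u, by omega, by omega, by omega⟩
    · exact ⟨u - n, by omega, by omega, by omega⟩
    · exact ⟨u, by omega, by omega, by omega⟩
    · exact ⟨v, by omega, by omega, by omega⟩
    · exact ⟨v, by omega, by omega, by omega⟩
    · exact ⟨v - n, by omega, by omega, by omega⟩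

theorem attachFourCycle_triPan_adj (n : ℕ) (i j : Fin (2 * n + 2)) (u v : Fin (2 * n + 2 + 2)) :
    (attachFourCycle (triPan n) i j).Adj u v ↔ AttachedStep n i j u v := by
  rw [attachFourCycle_adj]
  simp only [triPan_adj, AttachedStep, exists_prop]
  have : TriPanStep n u v ∨ TriPanStep n v u → (u : ℕ) < 2 * n + 2 ∧ (v : ℕ) < 2 * n + 2 := by
    simp only [TriPanStep]; omega
  tauto

theorem AttachedStep.triPanStep {n i j u v : ℕ} (h : AttachedStep n i j u v)
    (hu : u ≤ 2 * n + 1) (hv : v ≤ 2 * n + 1) : TriPanStep n u v ∨ TriPanStep n v u := by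
  rcases h with h | h | h
  · exact Or.inl h
  · exact Or.inr h
  · omega

theorem AttachedStep.symm {n i j u v : ℕ} (h : AttachedStep n i j u v) :
    AttachedStep n i j v u := by
  unfold AttachedStep at h ⊢
  tauto

/-- Edges between the vertices of two different triangles of the tri-pan. -/
theorem triPanStep_between_triangles {n k l x y : ℕ} (hk : 1 ≤ k) (hl : l ≤ n) (hkl : k < l)
    (hx : x = k ∨ x = n + k ∨ x = n + 1 + k) (hy : y = l ∨ y = n + l ∨ y = n + 1 + l)
    (h : TriPanStep n x y ∨ TriPanStep n y x) :
    (l = k + 1 ∧ (x = n + l ∨ y = n + l)) ∨ (x = n + 1 + k ∧ y = n + l) := by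
  unfold TriPanStep at h
  rcases hx with rfl | rfl | rfl <;> rcases hy with rfl | rfl | rfl <;> omega

/-- Two vertices of the triangle `{vₖ, y_{k-1}, yₖ}` satisfy `p`. -/
def TriangleMajority (n : ℕ) (p : ℕ → Prop) (k : ℕ) : Prop :=
  ∃ u v, p u ∧ p v ∧ ((u = k ∧ v = n + k) ∨ (u = k ∧ v = n + 1 + k) ∨ (u = n + k ∧ v = n + 1 + k))

theorem triangleMajority_or {n k : ℕ} {p q : ℕ → Prop} (hor : ∀ u, u ≤ 2 * n + 1 → p u ∨ q u)
    (hk : k ≤ n) : TriangleMajority n p k ∨ TriangleMajority n q k := by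
  have hpair : ∀ {r : ℕ → Prop}, (r k ∧ r (n + k)) ∨ (r k ∧ r (n + 1 + k)) ∨
      (r (n + k) ∧ r (n + 1 + k)) → TriangleMajority n r k := by
    rintro r (h | h | h)
    exacts [⟨_, _, h.1, h.2, by simp⟩, ⟨_, _, h.1, h.2, by simp⟩, ⟨_, _, h.1, h.2, by simp⟩]
  have h₁ := hor k (by omega)
  have h₂ := hor (n + k) (by omega)
  have h₃ := hor (n + 1 + k) (by omega)
  refine Or.imp hpair hpair ?_
  tauto

/-- Disjoint edges of two triangles of the tri-pan are never opposite edges of a 4-cycle. -/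
theorem not_triPanStep_matching {n k l u v s t : ℕ} (hk : 1 ≤ k ∧ k ≤ n) (hl : 1 ≤ l ∧ l ≤ n)
    (hu : u = k ∨ u = n + k ∨ u = n + 1 + k) (hv : v = k ∨ v = n + k ∨ v = n + 1 + k)
    (hs : s = l ∨ s = n + l ∨ s = n + 1 + l) (ht : t = l ∨ t = n + l ∨ t = n + 1 + l)
    (huv : u ≠ v) (hst : s ≠ t) (hus : u ≠ s) (hut : u ≠ t) (hvs : v ≠ s) (hvt : v ≠ t)
    (h₁ : TriPanStep n u s ∨ TriPanStep n s u) (h₂ : TriPanStep n v t ∨ TriPanStep n t v) :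
    False := by
  rcases lt_trichotomy k l with h | rfl | h
  · have h₃ := triPanStep_between_triangles hk.1 hl.2 h hu hs h₁
    have h₄ := triPanStep_between_triangles hk.1 hl.2 h hv ht h₂
    clear hu hv hs ht h₁ h₂
    omega
  · clear h₁ h₂
    omega
  · have h₃ := triPanStep_between_triangles hl.1 hk.2 h hs hu h₁.symm
    have h₄ := triPanStep_between_triangles hl.1 hk.2 h ht hv h₂.symm
    clear hu hv hs ht h₁ h₂
    omega

/-- Two triangles cannot have edges in `p` and `q` if edges in `p` and `q` are always opposite edges
of a 4-cycle. -/
theorem not_triangleMajority_of_cross {n i j : ℕ} {p q : ℕ → Prop} (hpq : ∀ u, p u → ¬ q u)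
    (hcross : ∀ u v s t, AttachedStep n i j u v → AttachedStep n i j s t → p u → p v → q s → q t →
      (AttachedStep n i j u s ∧ AttachedStep n i j v t) ∨
      (AttachedStep n i j u t ∧ AttachedStep n i j v s))
    {k l : ℕ} (hk : 1 ≤ k ∧ k ≤ n) (hl : 1 ≤ l ∧ l ≤ n) (hpk : TriangleMajority n p k) :
    ¬ TriangleMajority n q l := by
  obtain ⟨u, v, hu, hv, huv⟩ := hpk
  rintro ⟨s, t, hs, ht, hst⟩
  have hne : ∀ {x y}, p x → q y → x ≠ y := fun hx hy h => hpq _ hx (h ▸ hy)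
  have hstep : ∀ {k x y}, 1 ≤ k ∧ k ≤ n →
      ((x = k ∧ y = n + k) ∨ (x = k ∧ y = n + 1 + k) ∨ (x = n + k ∧ y = n + 1 + k)) →
      AttachedStep n i j x y ∧ x ≠ y ∧ (x = k ∨ x = n + k ∨ x = n + 1 + k) ∧
        (y = k ∨ y = n + k ∨ y = n + 1 + k) ∧ x ≤ 2 * n + 1 ∧ y ≤ 2 * n + 1 := by
    intro k x y hk hxy
    refine ⟨Or.inl ?_, by omega⟩
    unfold TriPanStep
    omega
  obtain ⟨he, huv', hu', hv', hu₁, hv₁⟩ := hstep hk huv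
  obtain ⟨hf, hst', hs', ht', hs₁, ht₁⟩ := hstep hl hst
  rcases hcross u v s t he hf hu hv hs ht with ⟨h₁, h₂⟩ | ⟨h₁, h₂⟩
  · exact not_triPanStep_matching hk hl hu' hv' hs' ht' huv' hst' (hne hu hs) (hne hu ht)
      (hne hv hs) (hne hv ht) (h₁.triPanStep hu₁ hs₁) (h₂.triPanStep hv₁ ht₁)
  · exact not_triPanStep_matching hk hl hu' hv' ht' hs' huv' hst'.symm (hne hu ht) (hne hu hs)
      (hne hv ht) (hne hv hs) (h₁.triPanStep hu₁ ht₁) (h₂.triPanStep hv₁ hs₁)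

/-- If every triangle has two vertices in `p`, then no edge has both ends in `q`. -/
theorem not_attachedStep_of_triangleMajority {n i j : ℕ} (hn : 2 ≤ n) (hi : i < 2 * n + 2)
    (hj : j < 2 * n + 2) {p q : ℕ → Prop} (hpq : ∀ u, p u → ¬ q u)
    (hcross : ∀ u v s t, AttachedStep n i j u v → AttachedStep n i j s t → p u → p v → q s → q t →
      (AttachedStep n i j u s ∧ AttachedStep n i j v t) ∨
      (AttachedStep n i j u t ∧ AttachedStep n i j v s))
    (hp : ∀ k, 1 ≤ k → k ≤ n → TriangleMajority n p k) {s t : ℕ} (hs : q s) (ht : q t) :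
    ¬ AttachedStep n i j s t := by
  have hnot : ∀ k, 1 ≤ k → k ≤ n → ¬ TriangleMajority n q k := fun k h₁ h₂ =>
    not_triangleMajority_of_cross hpq hcross ⟨h₁, h₂⟩ ⟨h₁, h₂⟩ (hp k h₁ h₂)
  have hne : ∀ {x y}, p x → q y → x ≠ y := fun hx hy h => hpq _ hx (h ▸ hy)
  have hapex : ∀ k, 1 ≤ k → k ≤ n → q 0 → ¬ q k := by
    intro k h₁ h₂ h0 hk
    obtain ⟨u, v, hu, hv, huv⟩ := hp k h₁ h₂
    have hne₁ := hne hu hk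
    obtain ⟨rfl, rfl⟩ : u = n + k ∧ v = n + 1 + k := by omega
    have hbase : ∀ y, n < y → y ≤ 2 * n + 1 → ¬ AttachedStep n i j y 0 := by
      intro y hy₁ hy₂ hy
      have := hy.triPanStep hy₂ (by omega)
      unfold TriPanStep at this
      omega
    rcases hcross (n + k) (n + 1 + k) 0 k (Or.inl (by unfold TriPanStep; omega))
      (Or.inl (by unfold TriPanStep; omega)) hu hv h0 hk with h | h
    · exact hbase _ (by omega) (by omega) h.1
    · exact hbase _ (by omega) (by omega) h.2
  have htri : ∀ {s t}, q s → q t → ¬ TriPanStep n s t := by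
    rintro s t hs ht (⟨rfl, h₁, h₂⟩ | ⟨h₁, h₂, rfl⟩ | ⟨h₁, h₂, rfl⟩ | ⟨h₁, h₂, rfl⟩)
    · exact hapex t h₁ h₂ hs ht
    · exact hnot s h₁ h₂ ⟨s, n + s, hs, ht, by omega⟩
    · exact hnot s h₁ h₂ ⟨s, n + 1 + s, hs, ht, by omega⟩
    · exact hnot (s - n) (by omega) (by omega) ⟨s, s + 1, hs, ht, by omega⟩
  have hnbr : ∀ {w r}, AttachedStep n i j w r → w ≤ 2 * n + 1 →
      (r = 2 * n + 2 → w = i) ∧ (r = 2 * n + 3 → w = j) := by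
    intro w r h hw
    unfold AttachedStep TriPanStep at h
    omega
  obtain ⟨u, v, hu, hv, huv⟩ := hp 1 le_rfl (by omega)
  obtain ⟨u', v', hu', hv', huv'⟩ := hp 2 (by omega) hn
  have he : AttachedStep n i j u v := Or.inl (by unfold TriPanStep; omega)
  have he' : AttachedStep n i j u' v' := Or.inl (by unfold TriPanStep; omega)
  have hpend : ∀ {w r}, q w → q r → w ≤ 2 * n + 1 → (r = 2 * n + 2 ∨ r = 2 * n + 3) →
      ¬ AttachedStep n i j w r := by
    intro w r hw hr hwle hrval hwr
    have hw₁ := hnbr hwr hwle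
    have hne₁ := hne hu hw
    have hne₂ := hne hv hw
    rcases hcross u v w r he hwr hu hv hw hr with ⟨-, h⟩ | ⟨h, -⟩ <;>
      have := hnbr h (by omega) <;> omega
  have hmid : ∀ {x y}, AttachedStep n i j x y → p x → p y → q (2 * n + 2) → q (2 * n + 3) →
      x ≤ 2 * n + 1 → y ≤ 2 * n + 1 → (x = i ∧ y = j) ∨ (x = j ∧ y = i) := by
    intro x y hxy hx hy hq₁ hq₂ hxle hyle
    rcases hcross x y _ _ hxy (by unfold AttachedStep; omega) hx hy hq₁ hq₂ with ⟨h₁, h₂⟩ | ⟨h₁, h₂⟩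
    · exact Or.inl ⟨(hnbr h₁ hxle).1 rfl, (hnbr h₂ hyle).2 rfl⟩
    · exact Or.inr ⟨(hnbr h₁ hxle).2 rfl, (hnbr h₂ hyle).1 rfl⟩
  have hnomid : q (2 * n + 2) → ¬ q (2 * n + 3) := by
    intro hq₁ hq₂
    have h₁ := hmid he hu hv hq₁ hq₂ (by omega) (by omega)
    have h₂ := hmid he' hu' hv' hq₁ hq₂ (by omega) (by omega)
    omega
  intro hst
  rcases id hst with h | h | h | h | h | h | h | h
  · exact htri hs ht h
  · exact htri ht hs h
  · exact hpend hs ht (by omega) (by omega) hst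
  · exact hpend ht hs (by omega) (by omega) hst.symm
  · exact hnomid (h.1 ▸ hs) (h.2 ▸ ht)
  · exact hnomid (h.2 ▸ ht) (h.1 ▸ hs)
  · exact hpend ht hs (by omega) (by omega) hst.symm
  · exact hpend hs ht (by omega) (by omega) hst

theorem not_isSepHyperplane_attachFourCycle_triPan {n : ℕ} (hn : 2 ≤ n) (i j : Fin (2 * n + 2))
    {a : Fin (2 * n + 2 + 2) → ℝ} (ha : ∀ k, a k = 1 ∨ a k = -1)
    (hone : TriangleMajority n (fun m => ∃ h, a ⟨m, h⟩ = 1) 1) :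
    ¬ IsSepHyperplane (attachFourCycle (triPan n) i j) a 0 := by
  intro hsep
  set p : ℕ → Prop := fun m => ∃ h, a ⟨m, h⟩ = 1
  set q : ℕ → Prop := fun m => ∃ h, a ⟨m, h⟩ = -1
  have hpq : ∀ u, p u → ¬ q u := by
    rintro u ⟨h₁, h₂⟩ ⟨_, h₃⟩
    have := h₂.symm.trans h₃
    norm_num at this
  have hor : ∀ u, u < 2 * n + 2 + 2 → p u ∨ q u := fun u hu =>
    (ha ⟨u, hu⟩).imp (fun h => ⟨hu, h⟩) (fun h => ⟨hu, h⟩)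
  have hcross : ∀ u v s t, AttachedStep n i j u v → AttachedStep n i j s t → p u → p v → q s →
      q t → (AttachedStep n i j u s ∧ AttachedStep n i j v t) ∨
      (AttachedStep n i j u t ∧ AttachedStep n i j v s) := by
    rintro u v s t huv hst ⟨hu, hau⟩ ⟨hv, hav⟩ ⟨hs, has⟩ ⟨ht, hat⟩
    have h := hsep.cross ((attachFourCycle_triPan_adj n i j ⟨u, hu⟩ ⟨v, hv⟩).2 huv)
      ((attachFourCycle_triPan_adj n i j ⟨s, hs⟩ ⟨t, ht⟩).2 hst) hau hav has hat
    simpa only [attachFourCycle_triPan_adj] using h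
  have hall : ∀ k, 1 ≤ k → k ≤ n → TriangleMajority n p k := by
    intro k h₁ h₂
    have hnot := not_triangleMajority_of_cross hpq hcross ⟨le_rfl, by omega⟩ ⟨h₁, h₂⟩ hone
    exact (triangleMajority_or (fun u hu => hor u (by omega)) h₂).resolve_right hnot
  obtain ⟨u, v, ⟨hu, hau⟩, ⟨hv, hav⟩, huv⟩ := hone
  obtain ⟨s, t, hst, hneg⟩ := hsep.exists_adj_neg
    ((attachFourCycle_triPan_adj n i j ⟨u, hu⟩ ⟨v, hv⟩).2
      (Or.inl (by simp only [TriPanStep]; omega))) (by rw [hau, hav]; norm_num)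
  have hs : a s = -1 := (ha s).resolve_left fun h => by
    rcases ha t with h' | h' <;> linarith
  have ht : a t = -1 := (ha t).resolve_left fun h => by linarith
  exact not_attachedStep_of_triangleMajority hn i.2 j.2 hpq hcross hall ⟨s.2, hs⟩ ⟨t.2, ht⟩
    ((attachFourCycle_triPan_adj n i j s t).1 hst)

/-- For `n ≥ 2`, attaching a 4-cycle to the `n`-joined tri-pan `T(n)` at an
arbitrary edge `{i,j}` of `T(n)` yields a graph whose edge polytope is type II decomposable
but not type I decomposable. -/
theorem attachFourCycle_triPan_typeII_not_typeI (n : ℕ) (hn : 2 ≤ n)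
    (i j : Fin (2 * n + 2)) (hij : (triPan n).Adj i j) :
    TypeIIDecomposable (attachFourCycle (triPan n) i j) ∧
      ¬ TypeIDecomposable (attachFourCycle (triPan n) i j) := by
  refine ⟨attachFourCycle_typeIIDecomposable _ hij, ?_⟩
  rintro ⟨a, ha, hsep⟩
  have hor : ∀ u, u ≤ 2 * n + 1 → (∃ h, a ⟨u, h⟩ = 1) ∨ ∃ h, (-a) ⟨u, h⟩ = 1 := by
    intro u hu
    have hu' : u < 2 * n + 2 + 2 := by omega
    rcases ha ⟨u, hu'⟩ with hk | hk
    · exact Or.inl ⟨hu', hk⟩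
    · exact Or.inr ⟨hu', by simp [hk]⟩
  rcases triangleMajority_or hor (by omega : 1 ≤ n) with h | h
  · exact not_isSepHyperplane_attachFourCycle_triPan hn i j ha h hsep
  · refine not_isSepHyperplane_attachFourCycle_triPan hn i j (fun k => ?_) h hsep.neg
    rcases ha k with hk | hk <;> simp [hk]
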